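/- Let $V$ be a finite type and $r : V \to V \to \mathrm{Prop}$ a directed graph that is acyclic, i.e., no vertex $v$ satisfies $\mathrm{TransGen}\ r\ v\ v$ (there are no directed cycles). Suppose the edge $i \to j$ (i.e., $r\,i\,j$ holds) is covered: the parent set of $j$ equals the parent set of $i$ together with $i$, i.e., for all $k$, $r\,k\,j \leftrightarrow (r\,k\,i \lor k = i)$. Let $r'$ be the graph obtained from $r$ by reversing the edge $i \to j$: $r'\,a\,b$ holds iff ($r\,a\,b$ and not ($a = i$ and $b = j$)) or ($a = j$ and $b = i$). Then $r'$ is also acyclic. -/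

import Mathlib

/-!
Reversing `i → j` means deleting that edge and then adding `j → i`. Adding an edge `x → y` to an
acyclic graph creates a cycle exactly when the graph already has a path from `y` to `x`, so only a
second path from `i` to `j`, avoiding the edge `i → j`, could do harm. Such a path ends in an edge
`k → j` with `k ≠ i`. When `i → j` is covered, `k` has a path to `i` (the edge `k → i`), which
closes the initial segment from `i` to `k` to a cycle of the original graph.
-/

open Relation

section EdgeOperations

variable {V : Type*} {r : V → V → Prop} {a b i j x y : V}

/-- A directed graph, encoded as its edge relation, without directed cycles; a loop is a cycle. -/
def IsAcyclic (r : V → V → Prop) : Prop :=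
  ∀ v, ¬ TransGen r v v

/-- The directed graph `r` with the edge `x → y` removed; it is `r` itself if there is no such
edge. -/
def deleteEdge (r : V → V → Prop) (x y : V) : V → V → Prop :=
  fun a b => r a b ∧ ¬ (a = x ∧ b = y)

/-- The directed graph `r` with the edge `x → y` added. -/
def addEdge (r : V → V → Prop) (x y : V) : V → V → Prop :=
  fun a b => r a b ∨ (a = x ∧ b = y)

/-- The directed graph `r` with the edge `i → j` reversed. The edge `j → i` is present afterwards
even if `i → j` was not an edge of `r`. -/
def reverseEdge (r : V → V → Prop) (i j : V) : V → V → Prop :=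
  addEdge (deleteEdge r i j) j i

theorem IsAcyclic.mono {s : V → V → Prop} (hs : IsAcyclic s) (hrs : r ≤ s) : IsAcyclic r :=
  fun v hv => hs v (TransGen.mono hrs v v hv)

theorem deleteEdge_le : deleteEdge r x y ≤ r :=
  fun _ _ h => h.1

theorem le_addEdge : r ≤ addEdge r x y :=
  fun _ _ h => Or.inl h

theorem transGen_addEdge_iff :
    TransGen (addEdge r x y) a b ↔ TransGen r a b ∨ (ReflTransGen r a x ∧ ReflTransGen r y b) := by
  constructor
  · intro hab
    induction hab with
    | single hedge =>
      rcases hedge with hab | ⟨rfl, rfl⟩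
      · exact Or.inl (.single hab)
      · exact Or.inr ⟨.refl, .refl⟩
    | tail _ hedge ih =>
      rcases hedge with hbc | ⟨rfl, rfl⟩
      · exact ih.imp (·.tail hbc) (And.imp_right (·.tail hbc))
      · exact Or.inr ⟨ih.elim TransGen.to_reflTransGen And.left, .refl⟩
  · rintro (hab | ⟨hax, hyb⟩)
    · exact TransGen.mono le_addEdge a b hab
    · have hxy : TransGen (addEdge r x y) x y := .single (Or.inr ⟨rfl, rfl⟩)
      exact (hxy.trans_right (ReflTransGen.mono le_addEdge a x hax)).trans_left
        (ReflTransGen.mono le_addEdge y b hyb)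

theorem isAcyclic_addEdge_iff :
    IsAcyclic (addEdge r x y) ↔ IsAcyclic r ∧ ¬ ReflTransGen r y x := by
  constructor
  · intro h
    exact ⟨h.mono le_addEdge, fun hyx => h x (transGen_addEdge_iff.2 (Or.inr ⟨.refl, hyx⟩))⟩
  · rintro ⟨hr, hyx⟩ v hv
    rcases transGen_addEdge_iff.1 hv with hvv | ⟨hvx, hyv⟩
    · exact hr v hvv
    · exact hyx (hyv.trans hvx)

theorem not_reflTransGen_deleteEdge (hi : ¬ TransGen r i i) (hne : i ≠ j)
    (hpar : ∀ k, r k j → ReflTransGen r k i) : ¬ ReflTransGen (deleteEdge r i j) i j := by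
  intro hij
  rcases hij.cases_tail with hji | ⟨k, hik, hkj, hk⟩
  · exact hne hji.symm
  · have hki : k ≠ i := fun h => hk ⟨h, rfl⟩
    have hik' : TransGen r i k :=
      (reflTransGen_iff_eq_or_transGen.1 (ReflTransGen.mono deleteEdge_le i k hik)).resolve_left hki
    exact hi (hik'.trans_left (hpar k hkj))

end EdgeOperations

theorem covered_edge_reversal_acyclic_general {V : Type*} {r : V → V → Prop} (hr : IsAcyclic r)
    {i j : V} (hij : r i j) (hpar : ∀ k, r k j → ReflTransGen r k i) :
    IsAcyclic (reverseEdge r i j) := by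
  have hne : i ≠ j := by
    rintro rfl
    exact hr i (.single hij)
  exact isAcyclic_addEdge_iff.2
    ⟨hr.mono deleteEdge_le, not_reflTransGen_deleteEdge (hr i) hne hpar⟩

/-- Reversing a covered edge `i → j` of an acyclic directed graph yields an
acyclic directed graph. -/
theorem covered_edge_reversal_acyclic {V : Type*} [Fintype V]
    (r : V → V → Prop) (hacyc : ∀ v, ¬ Relation.TransGen r v v)
    (i j : V) (hij : r i j)
    (hcov : ∀ k, r k j ↔ (r k i ∨ k = i))
    (r' : V → V → Prop)
    (hr' : ∀ a b, r' a b ↔ ((r a b ∧ ¬ (a = i ∧ b = j)) ∨ (a = j ∧ b = i))) :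
    ∀ v, ¬ Relation.TransGen r' v v := by
  obtain rfl : r' = reverseEdge r i j := funext₂ fun a b => propext (hr' a b)
  exact covered_edge_reversal_acyclic_general hacyc hij fun k hkj =>
    ((hcov k).1 hkj).elim .single fun hki => hki ▸ .refl
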